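/- Let R be a commutative ring with unity equipped with an algebra-compatible closure cl. If P₁ and P₂ are distinct approximately prime ideals of R, then there exists f ∈ R such that exactly one of P₁, P₂ lies in V_Φ(⟨f⟩), where ⟨f⟩ is the principal ideal generated by f. In particular, the approximate Zariski topology on Spec_Φ(R) is T₀. -/

import Mathlib

open Pointwise

structure AlgClosure (R : Type*) [Ring R] where
  cl : Set R → Set R
  extensive : ∀ A : Set R, A ⊆ cl A
  mono : ∀ A B : Set R, A ⊆ B → cl A ⊆ cl B
  idem : ∀ A : Set R, cl (cl A) = cl A
  add_compat : ∀ A B : Set R, cl A + cl B ⊆ cl (A + B)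
  smul_left : ∀ (r : R) (A : Set R), r • cl A ⊆ cl (r • A)
  smul_right : ∀ (r : R) (A : Set R), (· * r) '' cl A ⊆ cl ((· * r) '' A)

def IsApproxIdeal {R : Type*} [Ring R] (c : AlgClosure R) (I : Set R) : Prop :=
  (0 : R) ∈ I ∧ (∀ x ∈ I, ∀ y ∈ I, x + y ∈ I) ∧ (∀ x ∈ I, -x ∈ I) ∧
    (∀ (r : R), ∀ x ∈ I, r * x ∈ c.cl I) ∧ (∀ (r : R), ∀ x ∈ I, x * r ∈ c.cl I)

def IsApproxPrime {R : Type*} [Ring R] (c : AlgClosure R) (P : Set R) : Prop :=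
  IsApproxIdeal c P ∧ P ≠ Set.univ ∧ ∀ x y : R, x * y ∈ c.cl P → x ∈ P ∨ y ∈ P


/-- The approximate prime spectrum. -/
def SpecPhi {R : Type*} [Ring R] (c : AlgClosure R) : Set (Set R) :=
  {P : Set R | IsApproxPrime c P}

/-- The closed sets of the approximate Zariski topology. -/
def VPhi {R : Type*} [Ring R] (c : AlgClosure R) (I : Set R) : Set (Set R) :=
  {P ∈ SpecPhi c | c.cl I ⊆ c.cl P}

/-! Primality tested on products `x * 1`, where `1 ∉ P`, shows that an approximately prime ideal
satisfies `cl P = P`. Hence `P ∈ V_Φ(⟨f⟩)` means exactly `f ∈ P`, and any element of the symmetric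
difference of two distinct approximate primes separates them. -/

section Ring

variable {R : Type*} [Ring R] {c : AlgClosure R} {I P : Set R}

theorem IsApproxIdeal.cl_eq_univ_of_one_mem (hI : IsApproxIdeal c I) (h_one : 1 ∈ I) :
    c.cl I = Set.univ := by
  obtain ⟨-, -, -, mul_mem_cl, -⟩ := hI
  exact Set.eq_univ_of_forall fun r ↦ mul_one r ▸ mul_mem_cl r 1 h_one

theorem IsApproxIdeal.span_singleton_subset_cl (hI : IsApproxIdeal c I) {f : R} (hf : f ∈ I) :
    (Ideal.span {f} : Set R) ⊆ c.cl I := by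
  obtain ⟨-, -, -, mul_mem_cl, -⟩ := hI
  intro x hx
  obtain ⟨r, rfl⟩ := Ideal.mem_span_singleton'.mp hx
  exact mul_mem_cl r f hf

namespace IsApproxPrime

theorem one_notMem (hP : IsApproxPrime c P) : 1 ∉ P := by
  obtain ⟨isApproxIdeal, ne_univ, mem_or_mem⟩ := hP
  intro h_one
  have cl_eq_univ : c.cl P = Set.univ := isApproxIdeal.cl_eq_univ_of_one_mem h_one
  refine ne_univ (Set.eq_univ_of_forall fun x ↦ ?_)
  exact or_self_iff.mp (mem_or_mem x x (cl_eq_univ ▸ Set.mem_univ (x * x)))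

theorem cl_eq_self (hP : IsApproxPrime c P) : c.cl P = P := by
  refine Set.Subset.antisymm (fun x hx ↦ ?_) (c.extensive P)
  have x_or_one_mem : x ∈ P ∨ 1 ∈ P := hP.2.2 x 1 ((mul_one x).symm ▸ hx)
  exact x_or_one_mem.resolve_right hP.one_notMem

theorem mem_VPhi_iff_subset (hP : IsApproxPrime c P) {A : Set R} : P ∈ VPhi c A ↔ A ⊆ P where
  mp h := ((c.extensive A).trans h.2).trans hP.cl_eq_self.subset
  mpr h := ⟨hP, c.mono A P h⟩

theorem mem_VPhi_span_singleton_iff (hP : IsApproxPrime c P) {f : R} :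
    P ∈ VPhi c (Ideal.span {f} : Set R) ↔ f ∈ P := by
  rw [hP.mem_VPhi_iff_subset]
  exact ⟨fun h ↦ h (Ideal.mem_span_singleton_self f),
    fun hf ↦ (hP.1.span_singleton_subset_cl hf).trans hP.cl_eq_self.subset⟩

end IsApproxPrime

end Ring

-- Over a noncommutative ring, `Ideal.span {f}` is the left ideal `R f`.
theorem stmt_11_general {R : Type*} [Ring R] (c : AlgClosure R) (P₁ P₂ : Set R)
    (h₁ : IsApproxPrime c P₁) (h₂ : IsApproxPrime c P₂) (hne : P₁ ≠ P₂) :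
    ∃ f : R, Xor (P₁ ∈ VPhi c (Ideal.span {f} : Set R))
      (P₂ ∈ VPhi c (Ideal.span {f} : Set R)) := by
  obtain ⟨f, hf⟩ : ∃ f, ¬(f ∈ P₁ ↔ f ∈ P₂) := by
    simpa only [ne_eq, Set.ext_iff, not_forall] using hne
  refine ⟨f, ?_⟩
  rwa [h₁.mem_VPhi_span_singleton_iff, h₂.mem_VPhi_span_singleton_iff, xor_iff_not_iff]

/-- the T₀ property of the approximate Zariski topology:
distinct approximate primes are separated by a basic closed set `V_Φ(⟨f⟩)`. -/
theorem stmt_11 {R : Type*} [CommRing R] (c : AlgClosure R) (P₁ P₂ : Set R)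
    (h₁ : IsApproxPrime c P₁) (h₂ : IsApproxPrime c P₂) (hne : P₁ ≠ P₂) :
    ∃ f : R, Xor' (P₁ ∈ VPhi c ((Ideal.span {f} : Ideal R) : Set R))
      (P₂ ∈ VPhi c ((Ideal.span {f} : Ideal R) : Set R)) :=
  stmt_11_general c P₁ P₂ h₁ h₂ hne
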